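/- arXiv:1909.05950 — 4 statements merged into one kernel-verified Lean document; each statement's English description precedes it below -/
import Mathlib

section
/- Convergence of the Blahut–Arimoto scheme at rate O(1/M) (Theorem 1 / Proposition 1): Suppose π* is a policy maximizing J, i.e. J(π*) ≥ J(π) for every policy π. Then for every integer M ≥ 1 there exists an integer m with 0 ≤ m < M such that J(π*) − ∑_{s : p(s)>0} p(s) B_{priorᵐ, πᵐ⁺¹}V(s) ≤ (1/(M·β)) ∑_{s : p(s)>0} p(s) · max_{a∈A} log(1/π⁰(a|s)). In particular the best iterate among the first M rounds has optimality gap O(1/M). -/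
open Finset

/-- A probability distribution on a finite type: nonnegative and sums to one. -/
def IsDist {X : Type*} [Fintype X] (d : X → ℝ) : Prop :=
  (∀ x, 0 ≤ d x) ∧ ∑ x, d x = 1

/-- Kullback–Leibler divergence: sum over points where `μ` is positive. -/
noncomputable def KL {X : Type*} [Fintype X] (μ ν : X → ℝ) : ℝ :=
  ∑ x, if 0 < μ x then μ x * Real.log (μ x / ν x) else 0

/-- Marginal action distribution of policy `π` under state distribution `p`. -/
noncomputable def margPol {S A : Type*} [Fintype S] [Fintype A]
    (p : S → ℝ) (π : S → A → ℝ) (a : A) : ℝ :=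
  ∑ s, p s * π s a

/-- Evaluation operator `B_{q,π} V (s)` (with `F s a = R s a + γ 𝔼[V]` precomputed). -/
noncomputable def Beval {S A : Type*} [Fintype S] [Fintype A]
    (F : S → A → ℝ) (β : ℝ) (q : A → ℝ) (π : S → A → ℝ) (s : S) : ℝ :=
  ∑ a, if 0 < π s a then π s a * (F s a - (1 / β) * Real.log (π s a / q a)) else 0

/-- Mutual-information-regularized objective `J(π)`. -/
noncomputable def Jobj {S A : Type*} [Fintype S] [Fintype A]
    (p : S → ℝ) (F : S → A → ℝ) (β : ℝ) (π : S → A → ℝ) : ℝ :=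
  ∑ s, if 0 < p s then
    p s * ∑ a, (if 0 < π s a then
      π s a * (F s a - (1 / β) * Real.log (π s a / margPol p π a)) else 0)
  else 0

/-- Blahut–Arimoto policy iterates. -/
noncomputable def BApol {S A : Type*} [Fintype S] [Fintype A]
    (p : S → ℝ) (F : S → A → ℝ) (β : ℝ) (π0 : S → A → ℝ) : ℕ → S → A → ℝ
  | 0 => π0
  | m + 1 => fun s a =>
      ((∑ s', p s' * BApol p F β π0 m s' a) * Real.exp (β * F s a)) /
        ∑ a', (∑ s', p s' * BApol p F β π0 m s' a') * Real.exp (β * F s a')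

/-- Blahut–Arimoto prior iterates: the marginal of the `m`-th policy under `p`. -/
noncomputable def BAprior {S A : Type*} [Fintype S] [Fintype A]
    (p : S → ℝ) (F : S → A → ℝ) (β : ℝ) (π0 : S → A → ℝ) (m : ℕ) (a : A) : ℝ :=
  ∑ s, p s * BApol p F β π0 m s a

lemma ba_pos {S A : Type*} [Fintype S] [Fintype A] [Nonempty A]
    (p : S → ℝ) (hp : IsDist p) (F : S → A → ℝ) (β : ℝ)
    (π0 : S → A → ℝ) (hπ0 : ∀ s, IsDist (π0 s)) (hπ0pos : ∀ s a, 0 < π0 s a) (m : ℕ) :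
    (∀ s a, 0 < BApol p F β π0 m s a) ∧ (∀ s, ∑ a, BApol p F β π0 m s a = 1) ∧
      (∀ a, 0 < BAprior p F β π0 m a) := by
  have key : ∀ π : S → A → ℝ, (∀ s a, 0 < π s a) → ∀ a, 0 < ∑ s, p s * π s a := by
    intro π h a
    have h0 : ∀ s ∈ univ, 0 ≤ p s * π s a := fun s _ => mul_nonneg (hp.1 s) (h s a).le
    rcases (Finset.sum_nonneg h0).lt_or_eq with h1 | h1
    · exact h1
    · exfalso
      have h2 := (Finset.sum_eq_zero_iff_of_nonneg h0).1 h1.symm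
      have h3 : ∑ s, p s = 0 := Finset.sum_eq_zero fun s hs => by
        rcases mul_eq_zero.1 (h2 s hs) with h4 | h4
        · exact h4
        · exact absurd h4 (h s a).ne'
      rw [hp.2] at h3
      exact one_ne_zero h3
  induction m with
  | zero =>
    refine ⟨hπ0pos, fun s => (hπ0 s).2, fun a => ?_⟩
    exact key π0 hπ0pos a
  | succ m ih =>
    obtain ⟨h1, h2, h3⟩ := ih
    have hZ : ∀ s, 0 < ∑ a', (∑ s', p s' * BApol p F β π0 m s' a') * Real.exp (β * F s a') :=
      fun s => Finset.sum_pos (fun a _ => mul_pos (h3 a) (Real.exp_pos _)) univ_nonempty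
    have h4 : ∀ s a, 0 < BApol p F β π0 (m + 1) s a := by
      intro s a
      rw [BApol]
      exact div_pos (mul_pos (h3 a) (Real.exp_pos _)) (hZ s)
    refine ⟨h4, fun s => ?_, key _ h4⟩
    simp only [BApol]
    rw [← Finset.sum_div]
    exact div_self (hZ s).ne'

/-- partition function -/
noncomputable def baZ {S A : Type*} [Fintype S] [Fintype A]
    (F : S → A → ℝ) (β : ℝ) (q : A → ℝ) (s : S) : ℝ :=
  ∑ a, q a * Real.exp (β * F s a)

lemma ba_log {S A : Type*} [Fintype S] [Fintype A] [Nonempty A]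
    (p : S → ℝ) (hp : IsDist p) (F : S → A → ℝ) (β : ℝ)
    (π0 : S → A → ℝ) (hπ0 : ∀ s, IsDist (π0 s)) (hπ0pos : ∀ s a, 0 < π0 s a) (m : ℕ) (s : S)
    (a : A) :
    Real.log (BApol p F β π0 (m+1) s a) = Real.log (BAprior p F β π0 m a) + β * F s a
      - Real.log (baZ F β (BAprior p F β π0 m) s) := by
  obtain ⟨h1, h2, h3⟩ := ba_pos p hp F β π0 hπ0 hπ0pos m
  have hZ : 0 < baZ F β (BAprior p F β π0 m) s :=
    Finset.sum_pos (fun a _ => mul_pos (h3 a) (Real.exp_pos _)) univ_nonempty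
  have : BApol p F β π0 (m+1) s a = BAprior p F β π0 m a * Real.exp (β * F s a) /
    baZ F β (BAprior p F β π0 m) s := by
    rw [BApol]; rfl
  rw [this, Real.log_div (mul_pos (h3 a) (Real.exp_pos _)).ne' hZ.ne',
    Real.log_mul (h3 a).ne' (Real.exp_pos _).ne', Real.log_exp]

lemma ba_eval {S A : Type*} [Fintype S] [Fintype A] [Nonempty A]
    (p : S → ℝ) (hp : IsDist p) (F : S → A → ℝ) (β : ℝ) (hβ : 0 < β)
    (π0 : S → A → ℝ) (hπ0 : ∀ s, IsDist (π0 s)) (hπ0pos : ∀ s a, 0 < π0 s a) (m : ℕ) (s : S) :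
    Beval F β (BAprior p F β π0 m) (BApol p F β π0 (m + 1)) s =
      Real.log (baZ F β (BAprior p F β π0 m) s) / β := by
  obtain ⟨h1, h2, h3⟩ := ba_pos p hp F β π0 hπ0 hπ0pos m
  obtain ⟨h4, h5, h6⟩ := ba_pos p hp F β π0 hπ0 hπ0pos (m+1)
  unfold Beval
  trans ∑ a, BApol p F β π0 (m + 1) s a * (Real.log (baZ F β (BAprior p F β π0 m) s) / β)
  swap
  · rw [← Finset.sum_mul, h5 s, one_mul]
  refine Finset.sum_congr rfl fun a _ => ?_
  rw [if_pos (h4 s a), Real.log_div (h4 s a).ne' (h3 a).ne',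
    ba_log p hp F β π0 hπ0 hπ0pos m s a]
  field_simp
  ring

lemma ba_point (p x ms q b b' f β L : ℝ) (hp : 0 ≤ p) (hx : 0 ≤ x) (hms : 0 ≤ ms)
    (hpos : 0 < p → 0 < x → 0 < ms) (hq : 0 < q) (hb : 0 < b)
    (hβ : 0 < β) (hL : Real.log b' = Real.log q + β * f - L) :
    p * (if 0 < x then x * (f - (1 / β) * Real.log (x / ms)) else 0) - p * x * (L / β) ≤
      (1 / β) * (p * x * (Real.log b' - Real.log b) + (ms / q * (p * b) - p * x)) := by
  rcases hp.eq_or_lt with rfl | hp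
  · simp
  rcases hx.eq_or_lt with rfl | hx
  · simp; positivity
  have hm := hpos hp hx
  rw [if_pos hx, hL, Real.log_div hx.ne' hm.ne']
  have ht : 0 < ms * b / (q * x) := by positivity
  have h := Real.log_le_sub_one_of_pos ht
  rw [Real.log_div (by positivity) (by positivity), Real.log_mul hm.ne' hb.ne',
    Real.log_mul hq.ne' hx.ne'] at h
  have h2 : p * x * (Real.log ms + Real.log b - (Real.log q + Real.log x)) ≤
      ms / q * (p * b) - p * x := by
    calc _ ≤ p * x * (ms * b / (q * x) - 1) := mul_le_mul_of_nonneg_left h (by positivity)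
      _ = _ := by field_simp
  have h3 : p * (x * (f - 1 / β * (Real.log x - Real.log ms))) - p * x * (L / β) =
    (1 / β) * (p * x * (β * f - Real.log x + Real.log ms - L)) := by
    field_simp; ring
  rw [h3]
  apply mul_le_mul_of_nonneg_left _ (by positivity)
  linarith

lemma ba_step {S A : Type*} [Fintype S] [Fintype A] [Nonempty A]
    (p : S → ℝ) (hp : IsDist p) (F : S → A → ℝ) (β : ℝ) (hβ : 0 < β)
    (π0 : S → A → ℝ) (hπ0 : ∀ s, IsDist (π0 s)) (hπ0pos : ∀ s a, 0 < π0 s a)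
    (πstar : S → A → ℝ) (hπstar : ∀ s, IsDist (πstar s)) (m : ℕ) :
    Jobj p F β πstar -
          (∑ s, if 0 < p s then
            p s * Beval F β (BAprior p F β π0 m) (BApol p F β π0 (m + 1)) s else 0)
        ≤ (1 / β) * ((∑ s, ∑ a, p s * πstar s a * Real.log (BApol p F β π0 (m+1) s a)) -
          ∑ s, ∑ a, p s * πstar s a * Real.log (BApol p F β π0 m s a)) := by
  obtain ⟨h1, h2, h3⟩ := ba_pos p hp F β π0 hπ0 hπ0pos m
  have hif : ∀ (s : S) (y : ℝ), (if 0 < p s then p s * y else 0) = p s * y := by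
    intro s y
    split_ifs with h
    · rfl
    · rw [le_antisymm (not_lt.1 h) (hp.1 s), zero_mul]
  have hms : ∀ a, 0 ≤ margPol p πstar a := fun a =>
    Finset.sum_nonneg fun s _ => mul_nonneg (hp.1 s) ((hπstar s).1 a)
  have hL : Jobj p F β πstar -
          (∑ s, if 0 < p s then
            p s * Beval F β (BAprior p F β π0 m) (BApol p F β π0 (m + 1)) s else 0) =
      ∑ s, ∑ a, (p s * (if 0 < πstar s a then πstar s a * (F s a - (1 / β) *
        Real.log (πstar s a / margPol p πstar a)) else 0) - p s * πstar s a *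
          (Real.log (baZ F β (BAprior p F β π0 m) s) / β)) := by
    unfold Jobj
    rw [← Finset.sum_sub_distrib]
    refine Finset.sum_congr rfl fun s _ => ?_
    rw [hif, hif, ba_eval p hp F β hβ π0 hπ0 hπ0pos, Finset.sum_sub_distrib, ← Finset.mul_sum,
      ← Finset.sum_mul, ← Finset.mul_sum, (hπstar s).2, mul_one]
  have hz : ∑ s, ∑ a, (margPol p πstar a / BAprior p F β π0 m a * (p s * BApol p F β π0 m s a)
      - p s * πstar s a) = 0 := by
    rw [Finset.sum_comm]
    refine Finset.sum_eq_zero fun a _ => ?_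
    rw [Finset.sum_sub_distrib, ← Finset.mul_sum]
    change margPol p πstar a / BAprior p F β π0 m a * BAprior p F β π0 m a
      - margPol p πstar a = 0
    rw [div_mul_cancel₀ _ (h3 a).ne', sub_self]
  rw [hL]
  calc _ ≤ ∑ s, ∑ a, (1 / β) * (p s * πstar s a * (Real.log (BApol p F β π0 (m+1) s a)
          - Real.log (BApol p F β π0 m s a)) +
          (margPol p πstar a / BAprior p F β π0 m a * (p s * BApol p F β π0 m s a)
            - p s * πstar s a)) := by
        refine Finset.sum_le_sum fun s _ => Finset.sum_le_sum fun a _ => ?_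
        refine ba_point _ _ _ _ _ _ _ _ _ (hp.1 s) ((hπstar s).1 a) (hms a) ?_ (h3 a) (h1 s a)
          hβ (ba_log p hp F β π0 hπ0 hπ0pos m s a)
        intro ha hb
        exact (mul_pos ha hb).trans_le (Finset.single_le_sum
          (f := fun s => p s * πstar s a)
          (fun s _ => mul_nonneg (hp.1 s) ((hπstar s).1 a)) (mem_univ s))
    _ = _ := by
        simp only [← Finset.mul_sum, Finset.sum_add_distrib] at hz ⊢
        rw [hz, add_zero]
        simp only [mul_sub, Finset.sum_sub_distrib]

/-- Convergence of the Blahut–Arimoto scheme at rate O(1/M). -/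
theorem blahut_arimoto_convergence_rate
    {S A : Type*} [Fintype S] [Fintype A] [Nonempty S] [Nonempty A]
    (p : S → ℝ) (hp : IsDist p)
    (R : S → A → ℝ) (P : S → A → S → ℝ) (hP : ∀ s a, IsDist (P s a))
    (V : S → ℝ) (β : ℝ) (hβ : 0 < β) (γ : ℝ) (hγ : 0 < γ ∧ γ < 1)
    (F : S → A → ℝ) (hF : ∀ s a, F s a = R s a + γ * ∑ s', P s a s' * V s')
    (π0 : S → A → ℝ) (hπ0 : ∀ s, IsDist (π0 s)) (hπ0pos : ∀ s a, 0 < π0 s a)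
    (πstar : S → A → ℝ) (hπstar : ∀ s, IsDist (πstar s))
    (hopt : ∀ π : S → A → ℝ, (∀ s, IsDist (π s)) → Jobj p F β π ≤ Jobj p F β πstar)
    (M : ℕ) (hM : 1 ≤ M) :
    ∃ m < M,
      Jobj p F β πstar -
          (∑ s, if 0 < p s then
            p s * Beval F β (BAprior p F β π0 m) (BApol p F β π0 (m + 1)) s else 0)
        ≤ (1 / ((M : ℝ) * β)) *
            ∑ s, (if 0 < p s then
              p s * (Finset.univ.sup' Finset.univ_nonempty
                fun a => Real.log (1 / π0 s a)) else 0) := by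
  by_contra hcon
  push Not at hcon
  have hMpos : (0 : ℝ) < M := by exact_mod_cast hM
  set C := ∑ s, (if 0 < p s then
              p s * (Finset.univ.sup' Finset.univ_nonempty
                fun a => Real.log (1 / π0 s a)) else 0) with hC
  let T : ℕ → ℝ := fun m => ∑ s, ∑ a, p s * πstar s a * Real.log (BApol p F β π0 m s a)
  have hlt : ∑ m ∈ range M, (1 / ((M : ℝ) * β)) * C <
      ∑ m ∈ range M, (1 / β) * (T (m + 1) - T m) := by
    refine Finset.sum_lt_sum_of_nonempty ⟨0, mem_range.2 hM⟩ fun m hm => ?_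
    exact (hcon m (mem_range.1 hm)).trans_le
      (ba_step p hp F β hβ π0 hπ0 hπ0pos πstar hπstar m)
  rw [Finset.sum_const, card_range, nsmul_eq_mul, ← Finset.mul_sum, Finset.sum_range_sub] at hlt
  have e : (M : ℝ) * (1 / ((M : ℝ) * β) * C) = (1 / β) * C := by field_simp
  rw [e] at hlt
  have hlt2 := lt_of_mul_lt_mul_left hlt (by positivity)
  have hTM : T M ≤ 0 := by
    obtain ⟨h1, h2, h3⟩ := ba_pos p hp F β π0 hπ0 hπ0pos M
    refine Finset.sum_nonpos fun s _ => Finset.sum_nonpos fun a _ => ?_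
    refine mul_nonpos_of_nonneg_of_nonpos (mul_nonneg (hp.1 s) ((hπstar s).1 a)) ?_
    refine Real.log_nonpos (h1 s a).le ?_
    rw [← h2 s]
    exact Finset.single_le_sum (fun a _ => (h1 s a).le) (mem_univ a)
  have hT0 : -T 0 ≤ C := by
    simp only [T, hC, BApol]
    rw [← Finset.sum_neg_distrib]
    refine Finset.sum_le_sum fun s _ => ?_
    split_ifs with h
    · rw [← Finset.sum_neg_distrib]
      calc _ ≤ ∑ a, p s * πstar s a * (Finset.univ.sup' Finset.univ_nonempty
                fun a => Real.log (1 / π0 s a)) := by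
            refine Finset.sum_le_sum fun a _ => ?_
            rw [← mul_neg]
            refine mul_le_mul_of_nonneg_left ?_ (mul_nonneg (hp.1 s) ((hπstar s).1 a))
            rw [← Real.log_inv, ← one_div]
            exact Finset.le_sup' (fun a => Real.log (1 / π0 s a)) (mem_univ a)
        _ = _ := by rw [← Finset.sum_mul, ← Finset.mul_sum, (hπstar s).2, mul_one]
    · rw [le_antisymm (not_lt.1 h) (hp.1 s)]
      simp
  linarith
end

section
/- Completing convergence (Lemma 4, Eq. 16): Suppose π* is a policy maximizing J, i.e. J(π*) ≥ J(π) for every policy π. Then for every integer M ≥ 1, (1/M) ∑_{m=0}^{M−1} ( J(π*) − ∑_{s : p(s)>0} p(s) B_{priorᵐ, πᵐ⁺¹}V(s) ) ≤ (1/(M·β)) ∑_{s : p(s)>0} p(s) · max_{a∈A} log(1/π⁰(a|s)). -/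
open Finset

lemma marg_pos {S A : Type*} [Fintype S] [Fintype A] (p : S → ℝ) (hp : IsDist p)
    (π : S → A → ℝ) (h : ∀ s a, 0 < π s a) (a : A) : 0 < ∑ s, p s * π s a := by
  obtain ⟨s, hs⟩ : ∃ s, 0 < p s := by
    by_contra! hc
    have h1 : ∑ s, p s ≤ 0 := Finset.sum_nonpos fun s _ => hc s
    rw [hp.2] at h1
    linarith
  exact Finset.sum_pos' (fun s _ => mul_nonneg (hp.1 s) (h s a).le)
    ⟨s, Finset.mem_univ s, mul_pos hs (h s a)⟩

lemma BA_pos_sum {S A : Type*} [Fintype S] [Fintype A] [Nonempty A]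
    (p : S → ℝ) (hp : IsDist p) (β : ℝ) (F : S → A → ℝ)
    (π0 : S → A → ℝ) (hπ0 : ∀ s, IsDist (π0 s)) (hπ0pos : ∀ s a, 0 < π0 s a) (m : ℕ) :
    (∀ s a, 0 < BApol p F β π0 m s a) ∧ ∀ s, ∑ a, BApol p F β π0 m s a = 1 := by
  induction m with
  | zero => exact ⟨hπ0pos, fun s => (hπ0 s).2⟩
  | succ k ih =>
    have hq := marg_pos p hp _ ih.1
    have hZ : ∀ s, 0 < ∑ a', (∑ s', p s' * BApol p F β π0 k s' a') * Real.exp (β * F s a') :=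
      fun s => Finset.sum_pos (fun a _ => mul_pos (hq a) (Real.exp_pos _)) Finset.univ_nonempty
    constructor
    · intro s a
      exact div_pos (mul_pos (hq a) (Real.exp_pos _)) (hZ s)
    · intro s
      simp only [BApol]
      rw [← Finset.sum_div]
      exact div_self (hZ s).ne'

lemma BA_step {S A : Type*} [Fintype S] [Fintype A] [Nonempty A]
    (p : S → ℝ) (hp : IsDist p) (β : ℝ) (hβ : 0 < β) (F : S → A → ℝ)
    (π π' ps : S → A → ℝ) (q : A → ℝ) (hq : ∀ a, q a = ∑ s, p s * π s a)
    (hπ : ∀ s a, 0 < π s a) 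
    (hπ' : ∀ s a, π' s a = q a * Real.exp (β * F s a) / ∑ a', q a' * Real.exp (β * F s a'))
    (hsum : ∀ s, ∑ a, π' s a = 1)
    (hps : ∀ s, IsDist (ps s)) :
    Jobj p F β ps - (∑ s, if 0 < p s then p s * Beval F β q π' s else 0)
      ≤ 1 / β * ∑ s, ∑ a, p s * ps s a * (Real.log (π' s a) - Real.log (π s a)) := by
  have hqp : ∀ a, 0 < q a := fun a => by rw [hq]; exact marg_pos p hp π hπ a
  set Z : S → ℝ := fun s => ∑ a', q a' * Real.exp (β * F s a') with hZd
  have hZ : ∀ s, 0 < Z s :=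
      fun s => Finset.sum_pos (fun a _ => mul_pos (hqp a) (Real.exp_pos _)) Finset.univ_nonempty
  have hπ'p : ∀ s a, 0 < π' s a := fun s a => by
    rw [hπ']; exact div_pos (mul_pos (hqp a) (Real.exp_pos _)) (hZ s)
  have hlog : ∀ s a, Real.log (π' s a) = Real.log (q a) + β * F s a - Real.log (Z s) := by
    intro s a
    rw [hπ', Real.log_div (mul_pos (hqp a) (Real.exp_pos _)).ne' (hZ s).ne',
      Real.log_mul (hqp a).ne' (Real.exp_pos _).ne', Real.log_exp]
  have hB : ∀ s, Beval F β q π' s = Real.log (Z s) / β := by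
    intro s
    unfold Beval
    have : ∀ a, (if 0 < π' s a then π' s a * (F s a - (1 / β) * Real.log (π' s a / q a)) else 0)
        = π' s a * (Real.log (Z s) / β) := by
      intro a
      rw [if_pos (hπ'p s a), Real.log_div (hπ'p s a).ne' (hqp a).ne', hlog]
      field_simp
      ring
    rw [Finset.sum_congr rfl fun a _ => this a, ← Finset.sum_mul, hsum, one_mul]
  have hBs : (∑ s, if 0 < p s then p s * Beval F β q π' s else 0)
      = ∑ s, ∑ a, p s * ps s a * (Real.log (Z s) / β) := by
    refine Finset.sum_congr rfl fun s _ => ?_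
    rw [← Finset.sum_mul, ← Finset.mul_sum, (hps s).2, mul_one, hB]
    split_ifs with h
    · rfl
    · rw [le_antisymm (not_lt.1 h) (hp.1 s), zero_mul]
  have hJ : Jobj p F β ps
      = ∑ s, ∑ a, p s * ps s a * (F s a - (1 / β) * Real.log (ps s a / margPol p ps a)) := by
    unfold Jobj
    refine Finset.sum_congr rfl fun s _ => ?_
    split_ifs with h
    · rw [Finset.mul_sum]
      refine Finset.sum_congr rfl fun a _ => ?_
      split_ifs with h2
      · ring
      · rw [le_antisymm (not_lt.1 h2) ((hps s).1 a)]; simp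
    · rw [le_antisymm (not_lt.1 h) (hp.1 s)]; simp
  have hzero : ∑ s, ∑ a, (p s * π s a * (margPol p ps a / q a) - p s * ps s a) = 0 := by
    rw [Finset.sum_comm]
    refine Finset.sum_eq_zero fun a _ => ?_
    rw [Finset.sum_sub_distrib, ← Finset.sum_mul, ← hq]
    unfold margPol
    field_simp [(hqp a).ne']
    ring
  have key : ∀ s a, p s * ps s a * (F s a - (1 / β) * Real.log (ps s a / margPol p ps a))
        - p s * ps s a * (Real.log (Z s) / β)
      ≤ 1 / β * (p s * ps s a * (Real.log (π' s a) - Real.log (π s a)))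
        + 1 / β * (p s * π s a * (margPol p ps a / q a) - p s * ps s a) := by
    intro s a
    have hm0 : 0 ≤ margPol p ps a :=
      Finset.sum_nonneg fun s _ => mul_nonneg (hp.1 s) ((hps s).1 a)
    rcases (mul_nonneg (hp.1 s) ((hps s).1 a)).eq_or_lt with h0 | h0
    · rw [← h0]
      have : 0 ≤ 1 / β * (p s * π s a * (margPol p ps a / q a)) := by
        have h1 := hp.1 s
        have h2 := hπ s a
        have h3 := hqp a
        positivity
      simpa using this
    · have hpp : 0 < p s := pos_of_mul_pos_left h0 ((hps s).1 a)
      have hpsp : 0 < ps s a := pos_of_mul_pos_right h0 (hp.1 s)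
      have hm : 0 < margPol p ps a :=
        lt_of_lt_of_le h0 (Finset.single_le_sum (f := fun s => p s * ps s a)
          (fun s _ => mul_nonneg (hp.1 s) ((hps s).1 a)) (Finset.mem_univ s))
      have h3 := hqp a
      have h2 := hπ s a
      have hx : 0 < π s a * margPol p ps a / (q a * ps s a) := by positivity
      have hl := Real.log_le_sub_one_of_pos hx
      rw [Real.log_div (by positivity) (by positivity), Real.log_mul h2.ne' hm.ne',
        Real.log_mul h3.ne' hpsp.ne'] at hl
      have hl2 := mul_le_mul_of_nonneg_left hl h0.le
      have e : p s * ps s a * (π s a * margPol p ps a / (q a * ps s a) - 1)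
          = p s * π s a * (margPol p ps a / q a) - p s * ps s a := by
        field_simp
      rw [e] at hl2
      have hl3 := mul_le_mul_of_nonneg_left hl2 (one_div_pos.2 hβ).le
      rw [Real.log_div hpsp.ne' hm.ne', hlog]
      refine le_trans (le_of_eq ?_) (add_le_add le_rfl hl3)
      field_simp
      ring
  rw [hJ, hBs, ← Finset.sum_sub_distrib]
  calc _ = ∑ s, ∑ a, (p s * ps s a * (F s a - (1 / β) * Real.log (ps s a / margPol p ps a))
        - p s * ps s a * (Real.log (Z s) / β)) := by
        refine Finset.sum_congr rfl fun s _ => ?_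
        rw [Finset.sum_sub_distrib]
    _ ≤ ∑ s, ∑ a, (1 / β * (p s * ps s a * (Real.log (π' s a) - Real.log (π s a)))
        + 1 / β * (p s * π s a * (margPol p ps a / q a) - p s * ps s a)) :=
        Finset.sum_le_sum fun s _ => Finset.sum_le_sum fun a _ => key s a
    _ = 1 / β * ∑ s, ∑ a, p s * ps s a * (Real.log (π' s a) - Real.log (π s a))
        + 1 / β * ∑ s, ∑ a, (p s * π s a * (margPol p ps a / q a) - p s * ps s a) := by
        simp only [Finset.mul_sum, Finset.sum_add_distrib]
    _ = _ := by rw [hzero]; ring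

/-- Completing convergence (Lemma 4, Eq. 16). -/
theorem blahut_arimoto_completing_convergence
    {S A : Type*} [Fintype S] [Fintype A] [Nonempty S] [Nonempty A]
    (p : S → ℝ) (hp : IsDist p)
    (R : S → A → ℝ) (P : S → A → S → ℝ) (hP : ∀ s a, IsDist (P s a))
    (V : S → ℝ) (β : ℝ) (hβ : 0 < β) (γ : ℝ) (hγ : 0 < γ ∧ γ < 1)
    (F : S → A → ℝ) (hF : ∀ s a, F s a = R s a + γ * ∑ s', P s a s' * V s')
    (π0 : S → A → ℝ) (hπ0 : ∀ s, IsDist (π0 s)) (hπ0pos : ∀ s a, 0 < π0 s a)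
    (πstar : S → A → ℝ) (hπstar : ∀ s, IsDist (πstar s))
    (hopt : ∀ π : S → A → ℝ, (∀ s, IsDist (π s)) → Jobj p F β π ≤ Jobj p F β πstar)
    (M : ℕ) (hM : 1 ≤ M) :
    (1 / (M : ℝ)) *
        ∑ m ∈ Finset.range M,
          (Jobj p F β πstar -
            ∑ s, if 0 < p s then
              p s * Beval F β (BAprior p F β π0 m) (BApol p F β π0 (m + 1)) s else 0)
      ≤ (1 / ((M : ℝ) * β)) *
          ∑ s, (if 0 < p s then
            p s * (Finset.univ.sup' Finset.univ_nonempty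
              fun a => Real.log (1 / π0 s a)) else 0) := by
  have hBA := BA_pos_sum p hp β F π0 hπ0 hπ0pos
  have hstep : ∀ m ∈ Finset.range M, _ ≤ _ := fun m _ =>
    BA_step p hp β hβ F (BApol p F β π0 m) (BApol p F β π0 (m + 1)) πstar
      (BAprior p F β π0 m) (fun a => rfl) (hBA m).1 (fun s a => rfl) (hBA (m + 1)).2 hπstar
  have h1 := Finset.sum_le_sum hstep
  have hMp : (0 : ℝ) < M := by exact_mod_cast hM
  rw [← Finset.mul_sum, Finset.sum_comm] at h1
  have h2 : ∑ s, ∑ m ∈ Finset.range M, ∑ a, p s * πstar s a *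
      (Real.log (BApol p F β π0 (m + 1) s a) - Real.log (BApol p F β π0 m s a))
      ≤ ∑ s, (if 0 < p s then
            p s * (Finset.univ.sup' Finset.univ_nonempty
              fun a => Real.log (1 / π0 s a)) else 0) := by
    refine Finset.sum_le_sum fun s _ => ?_
    rw [Finset.sum_comm]
    split_ifs with h
    · calc _ ≤ ∑ a, p s * πstar s a * (Finset.univ.sup' Finset.univ_nonempty
              fun a => Real.log (1 / π0 s a)) := by
            refine Finset.sum_le_sum fun a _ => ?_
            rw [← Finset.mul_sum,
              Finset.sum_range_sub (fun m => Real.log (BApol p F β π0 m s a))]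
            refine mul_le_mul_of_nonneg_left ?_ (mul_nonneg (hp.1 s) ((hπstar s).1 a))
            refine le_trans ?_ (Finset.le_sup' (fun a => Real.log (1 / π0 s a))
              (Finset.mem_univ a))
            have hle : BApol p F β π0 M s a ≤ 1 := by
              rw [← (hBA M).2 s]
              exact Finset.single_le_sum (f := fun a => BApol p F β π0 M s a)
                (fun a _ => ((hBA M).1 s a).le) (Finset.mem_univ a)
            have := Real.log_nonpos ((hBA M).1 s a).le hle
            simp only [one_div, Real.log_inv, BApol]
            linarith
        _ = _ := by
            rw [← Finset.sum_mul, ← Finset.mul_sum, (hπstar s).2, mul_one]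
    · rw [le_antisymm (not_lt.1 h) (hp.1 s)]; simp
  have h3 := h1.trans (mul_le_mul_of_nonneg_left h2 (one_div_pos.2 hβ).le)
  have h4 := mul_le_mul_of_nonneg_left h3 (one_div_pos.2 hMp).le
  rw [← mul_assoc, one_div_mul_one_div] at h4
  exact h4
end

section
/- Upper expected optimal value bound (Lemma 3, Eq. 13): Suppose π* is a policy maximizing J, i.e. J(π*) ≥ J(π) for every policy π. Then for every integer m ≥ 0, J(π*) ≤ (1/β) ∑_{s : p(s)>0} p(s) ∑_{a∈A} π*(a|s) log( πᵐ⁺¹(a|s) / πᵐ(a|s) ) + ∑_{s : p(s)>0} p(s) B_{priorᵐ, πᵐ⁺¹}V(s). -/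
open Finset

theorem BApol_pos {S A : Type*} [Fintype S] [Fintype A] [Nonempty A]
    (p : S → ℝ) (hp : IsDist p) (F : S → A → ℝ) (β : ℝ)
    (π0 : S → A → ℝ) (hπ0pos : ∀ s a, 0 < π0 s a) (m : ℕ) :
    (∀ s a, 0 < BApol p F β π0 m s a) ∧ (∀ a, 0 < BAprior p F β π0 m a) := by
  have key : ∀ f : S → ℝ, (∀ s, 0 < f s) → 0 < ∑ s, p s * f s := by
    intro f hf
    have h0 : 0 ≤ ∑ s, p s * f s :=
      Finset.sum_nonneg fun s _ => mul_nonneg (hp.1 s) (hf s).le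
    refine lt_of_le_of_ne h0 fun h => ?_
    have h1 := (Finset.sum_eq_zero_iff_of_nonneg
      (fun s _ => mul_nonneg (hp.1 s) (hf s).le)).1 h.symm
    have h2 : ∑ s, p s = 0 := Finset.sum_eq_zero fun s hs => by
      rcases mul_eq_zero.1 (h1 s hs) with h | h
      · exact h
      · exact absurd h (hf s).ne'
    rw [hp.2] at h2
    exact one_ne_zero h2
  have pol : ∀ s a, 0 < BApol p F β π0 m s a := by
    induction m with
    | zero => exact hπ0pos
    | succ k ih =>
      intro s a
      simp only [BApol]
      have h : ∀ a, 0 < (∑ s', p s' * BApol p F β π0 k s' a) * Real.exp (β * F s a) :=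
        fun a => mul_pos (key _ fun s => ih s a) (Real.exp_pos _)
      exact div_pos (h a) (Finset.sum_pos (fun a _ => h a) Finset.univ_nonempty)
  exact ⟨pol, fun a => key _ fun s => pol s a⟩

theorem ite_pos_mul_eq (x y : ℝ) (hx : 0 ≤ x) : (if 0 < x then x * y else 0) = x * y := by
  split_ifs with h
  · rfl
  · have : x = 0 := le_antisymm (not_lt.1 h) hx
    simp [this]

/-- Upper expected optimal value bound (Lemma 3, Eq. 13). -/
theorem upper_expected_optimal_value_bound
    {S A : Type*} [Fintype S] [Fintype A] [Nonempty S] [Nonempty A]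
    (p : S → ℝ) (hp : IsDist p)
    (R : S → A → ℝ) (P : S → A → S → ℝ) (hP : ∀ s a, IsDist (P s a))
    (V : S → ℝ) (β : ℝ) (hβ : 0 < β) (γ : ℝ) (hγ : 0 < γ ∧ γ < 1)
    (F : S → A → ℝ) (hF : ∀ s a, F s a = R s a + γ * ∑ s', P s a s' * V s')
    (π0 : S → A → ℝ) (hπ0 : ∀ s, IsDist (π0 s)) (hπ0pos : ∀ s a, 0 < π0 s a)
    (πstar : S → A → ℝ) (hπstar : ∀ s, IsDist (πstar s))
    (hopt : ∀ π : S → A → ℝ, (∀ s, IsDist (π s)) → Jobj p F β π ≤ Jobj p F β πstar)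
    (m : ℕ) :
    Jobj p F β πstar
      ≤ (1 / β) *
          (∑ s, if 0 < p s then
            p s * ∑ a, πstar s a *
              Real.log (BApol p F β π0 (m + 1) s a / BApol p F β π0 m s a) else 0) +
        ∑ s, (if 0 < p s then
          p s * Beval F β (BAprior p F β π0 m) (BApol p F β π0 (m + 1)) s else 0) := by
  obtain ⟨hpos, hprior⟩ := BApol_pos p hp F β π0 hπ0pos m
  obtain ⟨hpos1, -⟩ := BApol_pos p hp F β π0 hπ0pos (m + 1)
  simp only [Jobj, ite_pos_mul_eq _ _ (hp.1 _)]
  have hstar0 : ∀ s a, 0 ≤ πstar s a := fun s => (hπstar s).1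
  have hM0 : ∀ a, 0 ≤ margPol p πstar a := fun a =>
    Finset.sum_nonneg fun s _ => mul_nonneg (hp.1 s) (hstar0 s a)
  set q := BAprior p F β π0 m with hq
  set M := margPol p πstar with hM
  set u := BApol p F β π0 m with hu
  set w := BApol p F β π0 (m + 1) with hw
  have hwdef : ∀ s a, w s a = q a * Real.exp (β * F s a) /
      ∑ a', q a' * Real.exp (β * F s a') := fun s a => rfl
  have hZ : ∀ s, 0 < ∑ a', q a' * Real.exp (β * F s a') := fun s =>
    Finset.sum_pos (fun a _ => mul_pos (hprior a) (Real.exp_pos _)) Finset.univ_nonempty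
  set Z : S → ℝ := fun s => ∑ a', q a' * Real.exp (β * F s a') with hZd
  have hwdef' : ∀ s a, w s a = q a * Real.exp (β * F s a) / Z s := hwdef
  have hZ' : ∀ s, 0 < Z s := hZ
  have hwsum : ∀ s, ∑ a, w s a = 1 := by
    intro s
    simp only [hwdef']
    rw [← Finset.sum_div]
    exact div_self (hZ' s).ne'
  have hlogw : ∀ s a, Real.log (w s a) = Real.log (q a) + β * F s a - Real.log (Z s) := by
    intro s a
    rw [hwdef', Real.log_div (mul_pos (hprior a) (Real.exp_pos _)).ne' (hZ' s).ne',
      Real.log_mul (hprior a).ne' (Real.exp_pos _).ne', Real.log_exp]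
  have hB : ∀ s, Beval F β q w s = (1 / β) * Real.log (Z s) := by
    intro s
    have : ∀ a, (if 0 < w s a then w s a * (F s a - (1 / β) * Real.log (w s a / q a)) else 0)
        = w s a * ((1 / β) * Real.log (Z s)) := by
      intro a
      rw [if_pos (hpos1 s a), Real.log_div (hpos1 s a).ne' (hprior a).ne', hlogw]
      field_simp
      ring
    simp only [Beval, this]
    rw [← Finset.sum_mul, hwsum, one_mul]
  have hpt : ∀ s, 0 < p s → ∀ a, (if 0 < πstar s a then
      πstar s a * (F s a - (1 / β) * Real.log (πstar s a / M a)) else 0) ≤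
      (1 / β) * (πstar s a * Real.log (w s a / u s a)) + πstar s a * ((1 / β) * Real.log (Z s))
        + (1 / β) * (u s a * M a / q a - πstar s a) := by
    intro s hs a
    split_ifs with h
    · have hMpos : 0 < M a := lt_of_lt_of_le (mul_pos hs h)
        (Finset.single_le_sum (f := fun s => p s * πstar s a)
          (fun s _ => mul_nonneg (hp.1 s) (hstar0 s a)) (Finset.mem_univ s))
      have hx : 0 < u s a * M a / (q a * πstar s a) :=
        div_pos (mul_pos (hpos s a) hMpos) (mul_pos (hprior a) h)
      have hl := Real.log_le_sub_one_of_pos hx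
      rw [Real.log_div (mul_pos (hpos s a) hMpos).ne' (mul_pos (hprior a) h).ne',
        Real.log_mul (hpos s a).ne' hMpos.ne', Real.log_mul (hprior a).ne' h.ne'] at hl
      have hl2 := mul_le_mul_of_nonneg_left hl h.le
      have e1 : πstar s a * (u s a * M a / (q a * πstar s a) - 1)
          = u s a * M a / q a - πstar s a := by
        have := (hprior a).ne'
        have := h.ne'
        field_simp
      rw [e1] at hl2
      have hl3 := mul_le_mul_of_nonneg_left hl2 (one_div_pos.2 hβ).le
      rw [Real.log_div h.ne' hMpos.ne', Real.log_div (hpos1 s a).ne' (hpos s a).ne', hlogw]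
      have e2 : πstar s a * F s a = (1 / β) * (πstar s a * (β * F s a)) := by
        field_simp
      linear_combination hl3 + e2
    · have h0 : πstar s a = 0 := le_antisymm (not_lt.1 h) (hstar0 s a)
      rw [h0]
      have : 0 ≤ (1 / β) * (u s a * M a / q a) :=
        mul_nonneg (one_div_pos.2 hβ).le
          (div_nonneg (mul_nonneg (hpos s a).le (hM0 a)) (hprior a).le)
      linarith
  have hMsum : ∑ a, M a = 1 := by
    simp only [hM, margPol]
    rw [Finset.sum_comm]
    simp only [← Finset.mul_sum, (hπstar _).2, mul_one, hp.2]
  have hcorr : ∑ s, p s * ∑ a, (1 / β) * (u s a * M a / q a - πstar s a) = 0 := by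
    have h1 : ∀ s, p s * ∑ a, (1 / β) * (u s a * M a / q a - πstar s a)
        = (1 / β) * (∑ a, p s * u s a * (M a / q a)) - (1 / β) * p s := by
      intro s
      rw [← Finset.mul_sum, Finset.sum_sub_distrib, (hπstar s).2]
      have : ∑ a, p s * u s a * (M a / q a) = p s * ∑ a, u s a * M a / q a := by
        rw [Finset.mul_sum]
        exact Finset.sum_congr rfl fun a _ => by ring
      rw [this]
      ring
    simp only [h1]
    rw [Finset.sum_sub_distrib, ← Finset.mul_sum, ← Finset.mul_sum, hp.2, Finset.sum_comm]
    have h2 : ∀ a, ∑ s, p s * u s a * (M a / q a) = M a := by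
      intro a
      rw [← Finset.sum_mul]
      exact mul_div_cancel₀ (M a) (hprior a).ne'
    simp only [h2, hMsum]
    ring
  calc _ ≤ ∑ s, p s * ∑ a, ((1 / β) * (πstar s a * Real.log (w s a / u s a))
        + πstar s a * ((1 / β) * Real.log (Z s))
        + (1 / β) * (u s a * M a / q a - πstar s a)) := by
        refine Finset.sum_le_sum fun s _ => ?_
        rcases (hp.1 s).eq_or_lt with h | h
        · simp [← h]
        · exact mul_le_mul_of_nonneg_left (Finset.sum_le_sum fun a _ => hpt s h a) h.le
    _ = (1 / β) * (∑ s, p s * ∑ a, πstar s a * Real.log (w s a / u s a))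
        + ∑ s, p s * Beval F β q w s
        + ∑ s, p s * ∑ a, (1 / β) * (u s a * M a / q a - πstar s a) := by
        rw [Finset.mul_sum, ← Finset.sum_add_distrib, ← Finset.sum_add_distrib]
        refine Finset.sum_congr rfl fun s _ => ?_
        rw [Finset.sum_add_distrib, Finset.sum_add_distrib, ← Finset.sum_mul, (hπstar s).2,
          hB, ← Finset.mul_sum]
        ring
    _ = _ := by rw [hcorr, add_zero]
end

section
/- Optimal prior for a given policy (Lemma 1): Let p be a distribution on S, let π be a policy, and let m be the marginal of π under p. Then for every distribution q on A such that q(a) > 0 whenever m(a) > 0, one has ∑_{s : p(s)>0} p(s) B_{q,π}V(s) ≤ ∑_{s : p(s)>0} p(s) B_{m,π}V(s); that is, among all priors, the marginal of π under p maximizes the expected evaluation operator ∑_{s : p(s)>0} p(s) B_{prior,π}V(s). -/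
open Finset

/-- Optimal prior for a given policy (Lemma 1). -/
theorem optimal_prior_for_given_policy
    {S A : Type*} [Fintype S] [Fintype A] [Nonempty S] [Nonempty A]
    (p : S → ℝ) (hp : IsDist p)
    (R : S → A → ℝ) (P : S → A → S → ℝ) (hP : ∀ s a, IsDist (P s a))
    (V : S → ℝ) (β : ℝ) (hβ : 0 < β) (γ : ℝ) (hγ : 0 < γ ∧ γ < 1)
    (F : S → A → ℝ) (hF : ∀ s a, F s a = R s a + γ * ∑ s', P s a s' * V s')
    (π : S → A → ℝ) (hπ : ∀ s, IsDist (π s))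
    (q : A → ℝ) (hq : IsDist q)
    (hqpos : ∀ a, 0 < margPol p π a → 0 < q a) :
    ∑ s, (if 0 < p s then p s * Beval F β q π s else 0)
      ≤ ∑ s, (if 0 < p s then p s * Beval F β (margPol p π) π s else 0) := by
  obtain ⟨hp0, hp1⟩ := hp
  have hm0 : ∀ a, 0 ≤ margPol p π a := fun a =>
    Finset.sum_nonneg fun s _ => mul_nonneg (hp0 s) ((hπ s).1 a)
  have hm1 : ∑ a, margPol p π a = 1 := by
    unfold margPol
    rw [Finset.sum_comm]
    simp_rw [← Finset.mul_sum, (hπ _).2, mul_one]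
    exact hp1
  have key : ∀ s, (if 0 < p s then p s * Beval F β q π s else 0)
      ≤ (if 0 < p s then p s * Beval F β (margPol p π) π s else 0)
        + ∑ a, (1 / β) * ((p s * π s a) * (q a / margPol p π a - 1)) := by
    intro s
    by_cases hs : 0 < p s
    · simp only [hs, if_true]
      unfold Beval
      rw [Finset.mul_sum, Finset.mul_sum, ← Finset.sum_add_distrib]
      refine Finset.sum_le_sum fun a _ => ?_
      by_cases ha : 0 < π s a
      · simp only [ha, if_true]
        have hm : 0 < margPol p π a :=
          lt_of_lt_of_le (mul_pos hs ha)
            (Finset.single_le_sum (f := fun s => p s * π s a)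
              (fun s _ => mul_nonneg (hp0 s) ((hπ s).1 a)) (Finset.mem_univ s))
        have hqa := hqpos a hm
        have hl := Real.log_le_sub_one_of_pos (div_pos hqa hm)
        rw [Real.log_div hqa.ne' hm.ne'] at hl
        rw [Real.log_div ha.ne' hqa.ne', Real.log_div ha.ne' hm.ne']
        have hc : 0 ≤ (1 / β) * (p s * π s a) := by positivity
        have := mul_le_mul_of_nonneg_left hl hc
        linear_combination this
      · have h0 : π s a = 0 := le_antisymm (not_lt.mp ha) ((hπ s).1 a)
        simp [h0]
    · have h0 : p s = 0 := le_antisymm (not_lt.mp hs) (hp0 s)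
      simp [h0]
  refine (Finset.sum_le_sum fun s _ => key s).trans ?_
  rw [Finset.sum_add_distrib]
  have hfin : ∑ s, ∑ a, (1 / β) * ((p s * π s a) * (q a / margPol p π a - 1)) ≤ 0 := by
    rw [Finset.sum_comm]
    simp_rw [← Finset.mul_sum, ← Finset.sum_mul]
    refine mul_nonpos_of_nonneg_of_nonpos (by positivity) ?_
    have hle : ∑ a, (∑ s, p s * π s a) * (q a / margPol p π a - 1)
        ≤ ∑ a, (q a - margPol p π a) := by
      refine Finset.sum_le_sum fun a _ => ?_
      change margPol p π a * _ ≤ _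
      rcases (hm0 a).eq_or_lt with h | h
      · rw [← h]
        simpa using hq.1 a
      · apply le_of_eq
        field_simp
    rw [Finset.sum_sub_distrib, hq.2, hm1] at hle
    linarith
  linarith
end
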